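/- Let f: A → B and g: C → D be surjective homomorphisms of MV-algebras, and h: A → C, k: B → D homomorphisms with g∘h = k∘f. Let P := {(c,b) ∈ C×B : g(c)=k(b)} (with componentwise operations) and let ⟨h,f⟩: A → P be the homomorphism a ↦ (h(a),f(a)). Then ⟨h,f⟩ is surjective if and only if the restriction h: ker(f) → ker(g) is surjective (equivalently, h(ker(f)) = ker(g)). -/

import Mathlib

namespace MVPaper

/-- An MV-algebra: a set with a binary `⊕`, a unary `¬`, and a constant `0`
satisfying the MV-algebra axioms. -/
class MV (α : Type*) where
  oplus : α → α → α
  neg : α → α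
  zero : α
  oplus_assoc : ∀ x y z : α, oplus x (oplus y z) = oplus (oplus x y) z
  oplus_comm : ∀ x y : α, oplus x y = oplus y x
  oplus_zero : ∀ x : α, oplus x zero = x
  neg_neg : ∀ x : α, neg (neg x) = x
  oplus_neg_zero : ∀ x : α, oplus x (neg zero) = neg zero
  lukasiewicz : ∀ x y : α,
    oplus (neg (oplus (neg x) y)) y = oplus (neg (oplus (neg y) x)) x

namespace MV

variable {α : Type*} [MV α]

/-- `1 := ¬0`. -/
def one : α := neg zero

/-- `x ⊙ y := ¬(¬x ⊕ ¬y)`. -/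
def odot (x y : α) : α := neg (oplus (neg x) (neg y))

/-- `x ⊖ y := ¬(¬x ⊕ y)`. -/
def ominus (x y : α) : α := neg (oplus (neg x) y)

/-- `d(x,y) := (x ⊖ y) ⊕ (y ⊖ x)`. -/
def dist (x y : α) : α := oplus (ominus x y) (ominus y x)

/-- The natural order: `x ≤ y` iff `¬x ⊕ y = 1`. -/
def le (x y : α) : Prop := oplus (neg x) y = one

/-- `x ∨ y := (x ⊖ y) ⊕ y`. -/
def sup (x y : α) : α := oplus (ominus x y) y

/-- `x ∧ y := x ⊙ (¬x ⊕ y)`. -/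
def inf (x y : α) : α := odot x (oplus (neg x) y)

/-- `n · a`, the `n`-fold sum `a ⊕ ⋯ ⊕ a`. -/
def nsmul : ℕ → α → α
  | 0, _ => zero
  | n + 1, a => oplus a (nsmul n a)

end MV

/-- Products of MV-algebras, with componentwise operations. -/
instance prodMV {α β : Type*} [MV α] [MV β] : MV (α × β) where
  oplus x y := (MV.oplus x.1 y.1, MV.oplus x.2 y.2)
  neg x := (MV.neg x.1, MV.neg x.2)
  zero := (MV.zero, MV.zero)
  oplus_assoc x y z :=
    congrArg₂ Prod.mk (MV.oplus_assoc _ _ _) (MV.oplus_assoc _ _ _)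
  oplus_comm x y :=
    congrArg₂ Prod.mk (MV.oplus_comm _ _) (MV.oplus_comm _ _)
  oplus_zero x := by
    obtain ⟨a, b⟩ := x
    exact congrArg₂ Prod.mk (MV.oplus_zero a) (MV.oplus_zero b)
  neg_neg x := by
    obtain ⟨a, b⟩ := x
    exact congrArg₂ Prod.mk (MV.neg_neg a) (MV.neg_neg b)
  oplus_neg_zero x :=
    congrArg₂ Prod.mk (MV.oplus_neg_zero _) (MV.oplus_neg_zero _)
  lukasiewicz x y :=
    congrArg₂ Prod.mk (MV.lukasiewicz _ _) (MV.lukasiewicz _ _)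

/-- A homomorphism of MV-algebras: a map preserving `⊕`, `¬` and `0`. -/
structure IsHom {α β : Type*} [MV α] [MV β] (f : α → β) : Prop where
  map_zero : f MV.zero = MV.zero
  map_oplus : ∀ x y : α, f (MV.oplus x y) = MV.oplus (f x) (f y)
  map_neg : ∀ x : α, f (MV.neg x) = MV.neg (f x)

/-- An ideal of an MV-algebra: contains `0`, closed under `⊕`, downward closed. -/
structure IsIdeal {α : Type*} [MV α] (I : Set α) : Prop where
  zero_mem : MV.zero ∈ I
  oplus_mem : ∀ ⦃x⦄, x ∈ I → ∀ ⦃y⦄, y ∈ I → MV.oplus x y ∈ I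
  lower_mem : ∀ ⦃x⦄, x ∈ I → ∀ ⦃y⦄, MV.le y x → y ∈ I

/-- The kernel of a homomorphism. -/
def ker {α β : Type*} [MV α] [MV β] (f : α → β) : Set α := {x | f x = MV.zero}

/-- The radical of an MV-algebra: `Rad(A) = {a | n·a ≤ ¬a for all n}`
(the intersection of all maximal proper ideals). -/
def Rad (α : Type*) [MV α] : Set α :=
  {a | ∀ n : ℕ, MV.le (MV.nsmul n a) (MV.neg a)}

/-- `P(A) := Rad(A) ∪ ¬Rad(A)`. -/
def PSet (α : Type*) [MV α] : Set α :=
  Rad α ∪ {x | MV.neg x ∈ Rad α}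

/-- An MV-algebra is trivial if `0 = 1`. -/
def IsTrivial (α : Type*) [MV α] : Prop := (MV.zero : α) = MV.one

/-- An MV-algebra is semisimple if its radical is trivial. -/
def Semisimple (α : Type*) [MV α] : Prop := Rad α = ({MV.zero} : Set α)

/-- An MV-algebra is perfect if `A = Rad(A) ∪ ¬Rad(A)`. -/
def Perfect (α : Type*) [MV α] : Prop := ∀ a : α, a ∈ PSet α

/-- `q : α → Q` realizes `Q` as the quotient of `α` by the ideal `I`,
i.e. by the congruence `x ∼ y ↔ d(x,y) ∈ I`. -/
structure IsQuotientBy {α Q : Type*} [MV α] [MV Q] (I : Set α) (q : α → Q) : Prop where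
  hom : IsHom q
  surj : Function.Surjective q
  eq_iff : ∀ x y : α, q x = q y ↔ MV.dist x y ∈ I

/-!
If `g c = k (f a)`, then `c ⊖ h a` and `h a ⊖ c` lie in `ker g`, and
`c = (h a ⊖ (h a ⊖ c)) ⊕ (c ⊖ h a)`. When these differences are `h u` and `h v` with
`u, v ∈ ker f`, the element `(a ⊖ v) ⊕ u` is mapped by `h` to `c` and by `f` to `f a`.
-/

namespace MV

variable {α : Type*} [MV α]

theorem zero_oplus (x : α) : oplus zero x = x := by
  rw [oplus_comm, oplus_zero]

theorem neg_oplus_self (x : α) : oplus (neg x) x = neg zero := by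
  have h := lukasiewicz (neg zero) x
  rwa [neg_neg, zero_oplus, oplus_neg_zero] at h

theorem ominus_zero (x : α) : ominus x zero = x := by
  rw [ominus, oplus_zero, neg_neg]

theorem ominus_self (x : α) : ominus x x = zero := by
  rw [ominus, neg_oplus_self, neg_neg]

theorem ominus_ominus_self_left (x y : α) : ominus (ominus x y) x = zero := by
  rw [ominus, ominus, neg_neg, oplus_comm (neg x), ← oplus_assoc, neg_oplus_self,
    oplus_neg_zero, neg_neg]

theorem sup_comm (x y : α) : sup x y = sup y x :=
  lukasiewicz x y

theorem inf_eq_neg_sup_neg (x y : α) : inf x y = neg (sup (neg y) (neg x)) := by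
  rw [inf, odot, sup, ominus, neg_neg, oplus_comm (neg x) (neg _), oplus_comm (neg x) y]

theorem inf_comm (x y : α) : inf x y = inf y x := by
  rw [inf_eq_neg_sup_neg, sup_comm, ← inf_eq_neg_sup_neg]

theorem ominus_ominus_self (x y : α) : ominus x (ominus x y) = inf x y :=
  rfl

theorem sup_ominus_self (x y : α) : sup x (ominus x y) = x := by
  rw [sup_comm, sup, ominus_ominus_self_left, zero_oplus]

theorem inf_oplus_ominus (x y : α) : oplus (inf x y) (ominus y x) = y :=
  calc oplus (inf x y) (ominus y x)
      = oplus (ominus y (ominus y x)) (ominus y x) := by rw [ominus_ominus_self, inf_comm]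
    _ = y := sup_ominus_self y x

end MV

section

variable {α β γ δ : Type*} [MV α] [MV β] [MV γ] [MV δ]
  {f : α → β} {g : γ → δ} {h : α → γ} {k : β → δ}

theorem IsHom.map_ominus (hf : IsHom f) (x y : α) :
    f (MV.ominus x y) = MV.ominus (f x) (f y) := by
  rw [MV.ominus, MV.ominus, hf.map_neg, hf.map_oplus, hf.map_neg]

theorem IsHom.ominus_mem_ker (hf : IsHom f) {x y : α} (hxy : f x = f y) :
    MV.ominus x y ∈ ker f :=
  calc f (MV.ominus x y) = MV.ominus (f y) (f y) := by rw [hf.map_ominus, hxy]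
    _ = MV.zero := MV.ominus_self (f y)

theorem exists_map_eq_of_ominus_mem_image_ker (hf : IsHom f) (hh : IsHom h) {a : α} {c : γ}
    (hca : MV.ominus c (h a) ∈ h '' ker f) (hac : MV.ominus (h a) c ∈ h '' ker f) :
    ∃ a', h a' = c ∧ f a' = f a := by
  obtain ⟨u, hfu : f u = MV.zero, hhu⟩ := hca
  obtain ⟨v, hfv : f v = MV.zero, hhv⟩ := hac
  refine ⟨MV.oplus (MV.ominus a v) u, ?_, ?_⟩
  · rw [hh.map_oplus, hh.map_ominus, hhu, hhv, MV.ominus_ominus_self, MV.inf_oplus_ominus]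
  · rw [hf.map_oplus, hf.map_ominus, hfu, hfv, MV.ominus_zero, MV.oplus_zero]

theorem map_zero_of_comp_eq (hf : IsHom f) (hg : IsHom g) (hh : IsHom h)
    (hcomm : g ∘ h = k ∘ f) : k MV.zero = MV.zero :=
  calc k MV.zero = k (f MV.zero) := by rw [hf.map_zero]
    _ = g (h MV.zero) := (congrFun hcomm MV.zero).symm
    _ = MV.zero := by rw [hh.map_zero, hg.map_zero]

theorem mapsTo_ker_of_comp_eq (hk : k MV.zero = MV.zero) (hcomm : g ∘ h = k ∘ f) :
    Set.MapsTo h (ker f) (ker g) := fun a (ha : f a = MV.zero) =>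
  calc g (h a) = k (f a) := congrFun hcomm a
    _ = MV.zero := by rw [ha, hk]

theorem pairing_surjective_iff_general
    (hf : IsHom f) (hfs : Function.Surjective f) (hg : IsHom g) (hh : IsHom h)
    (hcomm : g ∘ h = k ∘ f) :
    Set.MapsTo h (ker f) (ker g) ∧
    ((∀ p : γ × β, g p.1 = k p.2 → ∃ a : α, (h a, f a) = p) ↔
      h '' ker f = ker g) := by
  have hk : k MV.zero = MV.zero := map_zero_of_comp_eq hf hg hh hcomm
  have hmaps : Set.MapsTo h (ker f) (ker g) := mapsTo_ker_of_comp_eq hk hcomm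
  refine ⟨hmaps, fun hsurj => hmaps.image_subset.antisymm fun c (hc : g c = MV.zero) => ?_,
    fun himage => ?_⟩
  · obtain ⟨a, ha⟩ := hsurj (c, MV.zero) (hc.trans hk.symm)
    exact ⟨a, congrArg Prod.snd ha, congrArg Prod.fst ha⟩
  · rintro ⟨c, b⟩ (hcb : g c = k b)
    obtain ⟨a, rfl⟩ := hfs b
    have hca : g c = g (h a) := hcb.trans (congrFun hcomm a).symm
    obtain ⟨a', hha', hfa'⟩ := exists_map_eq_of_ominus_mem_image_ker hf hh
      (himage ▸ hg.ominus_mem_ker hca) (himage ▸ hg.ominus_mem_ker hca.symm)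
    exact ⟨a', Prod.ext hha' hfa'⟩

end

/-- Given surjective homomorphisms `f : A → B`, `g : C → D` and homomorphisms
`h : A → C`, `k : B → D` with `g ∘ h = k ∘ f`, the induced map
`⟨h,f⟩ : A → P = {(c,b) : g c = k b}` is surjective iff the restriction
`h : ker f → ker g` is surjective, i.e. `h '' ker f = ker g`. -/
theorem pairing_surjective_iff {α β γ δ : Type*} [MV α] [MV β] [MV γ] [MV δ]
    {f : α → β} {g : γ → δ} {h : α → γ} {k : β → δ}
    (hf : IsHom f) (hfs : Function.Surjective f)
    (hg : IsHom g) (hgs : Function.Surjective g)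
    (hh : IsHom h) (hk : IsHom k)
    (hcomm : g ∘ h = k ∘ f) :
    Set.MapsTo h (ker f) (ker g) ∧
    ((∀ p : γ × β, g p.1 = k p.2 → ∃ a : α, (h a, f a) = p) ↔
      h '' ker f = ker g) :=
  pairing_surjective_iff_general hf hfs hg hh hcomm

end MVPaper
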